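/- arXiv:2410.15662 — 2 statements merged into one kernel-verified Lean document; each statement's English description precedes it below -/
import Mathlib

section
/- Let N = 1, T > 0, α > 0, λ_0 > 0, and let f : ℝ × (0,T) → ℝ be non-negative and measurable with sup_{x∈ℝ} f(x,t)e^{−λ_0 x} bounded from above on (0,T). Let s_0 ∈ ℝ. Then there exists no pair (u, s) with s : [0,T) → ℝ continuous on [0,T), continuously differentiable on (0,T), s(0) = s_0, and u a non-negative classical solution of ∂_t u − ∂_x² u = f on {(x,t) : x > s(t), 0 < t < T} with sup_{x∈ℝ, 0<t<T} u(x,t)e^{−λ_0 x} < ∞, satisfying u(s(t),t) = 0, ∂_x u(s(t),t) = α for 0 < t < T, continuous up to t = 0 with u(·,0) ≡ 0. -/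
set_option autoImplicit false

open Set Filter

/-- One-sided first order condition at a left maximum. -/
lemma deriv_nonneg_of_left_max {g : ℝ → ℝ} {d t : ℝ} (h : HasDerivAt g d t)
    (hm : ∀ᶠ r in nhdsWithin t (Iio t), g r ≤ g t) : 0 ≤ d := by
  have h1 := (hasDerivAt_iff_tendsto_slope.mp h).mono_left
    (nhdsWithin_mono t (s := Iio t) (fun x hx => ne_of_lt hx))
  refine ge_of_tendsto h1 ?_
  filter_upwards [hm, self_mem_nhdsWithin] with r hr hrt
  rw [slope_def_field]
  have hrt' : r < t := hrt
  exact div_nonneg_of_nonpos (by linarith) (by linarith)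

/-- Second order condition at a local maximum. -/
lemma second_deriv_nonpos {g g' : ℝ → ℝ} {d x : ℝ}
    (h1 : ∀ᶠ y in nhds x, HasDerivAt g (g' y) y) (h2 : HasDerivAt g' d x)
    (hm : IsLocalMax g x) : d ≤ 0 := by
  by_contra hd
  push Not at hd
  have h0 : g' x = 0 := hm.hasDerivAt_eq_zero h1.self_of_nhds
  have hder : deriv g =ᶠ[nhds x] g' := h1.mono (fun y hy => hy.deriv)
  have hdd : deriv (deriv g) x = d := by rw [hder.deriv_eq]; exact h2.deriv
  have hmin : IsLocalMin g x :=
    isLocalMin_of_deriv_deriv_pos (by rw [hdd]; exact hd) (by rw [hder.self_of_nhds]; exact h0)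
      h1.self_of_nhds.continuousAt
  have hc : g =ᶠ[nhds x] fun _ => g x := by
    filter_upwards [hm, hmin] with y h3 h4
    exact le_antisymm h3 h4
  have hc1 : deriv g =ᶠ[nhds x] fun _ => 0 := by
    have := hc.deriv
    simpa using this
  have : deriv (deriv g) x = 0 := by rw [hc1.deriv_eq]; simp
  linarith

/-- Weak maximum principle for strict subsolutions on a region with moving left boundary. -/
lemma max_principle (a : ℝ → ℝ) (b τ : ℝ) (ha : ContinuousOn a (Icc 0 τ))
    (z zx zxx zt : ℝ → ℝ → ℝ)
    (hz : ContinuousOn (fun p : ℝ × ℝ => z p.1 p.2)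
      {p : ℝ × ℝ | p.2 ∈ Icc 0 τ ∧ a p.2 ≤ p.1 ∧ p.1 ≤ b})
    (hd : ∀ t ∈ Ioc 0 τ, ∀ x ∈ Ioo (a t) b,
      HasDerivAt (fun ξ => z ξ t) (zx x t) x ∧ HasDerivAt (fun ξ => zx ξ t) (zxx x t) x ∧
      HasDerivAt (fun r => z x r) (zt x t) t ∧ zt x t < zxx x t)
    (h0 : ∀ x, a 0 ≤ x → x ≤ b → z x 0 ≤ 0)
    (hl : ∀ t ∈ Icc 0 τ, a t ≤ b → z (a t) t ≤ 0)
    (hr : ∀ t ∈ Icc 0 τ, a t ≤ b → z b t ≤ 0) :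
    ∀ t ∈ Icc 0 τ, ∀ x, a t ≤ x → x ≤ b → z x t ≤ 0 := by
  intro t ht x hx hxb
  set K : Set (ℝ × ℝ) := {p : ℝ × ℝ | p.2 ∈ Icc 0 τ ∧ a p.2 ≤ p.1 ∧ p.1 ≤ b} with hK
  have hKc : IsCompact K := by
    obtain ⟨m, hm⟩ := (isCompact_Icc.image_of_continuousOn ha).bddBelow
    have hbox : IsCompact (Icc m b ×ˢ Icc (0:ℝ) τ) := isCompact_Icc.prod isCompact_Icc
    have hcl : IsClosed (Icc m b ×ˢ Icc (0:ℝ) τ) := isClosed_Icc.prod isClosed_Icc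
    have hcont : ContinuousOn (fun p : ℝ × ℝ => p.1 - a p.2) (Icc m b ×ˢ Icc (0:ℝ) τ) :=
      continuousOn_fst.sub (ha.comp continuousOn_snd (fun p hp => hp.2))
    have := hcont.preimage_isClosed_of_isClosed hcl (isClosed_Ici (a := (0:ℝ)))
    have hEq : K = (Icc m b ×ˢ Icc (0:ℝ) τ) ∩ (fun p : ℝ × ℝ => p.1 - a p.2) ⁻¹' Ici 0 := by
      ext p
      constructor
      · rintro ⟨h1, h2, h3⟩
        exact ⟨⟨⟨(hm (mem_image_of_mem a h1)).trans h2, h3⟩, h1⟩, sub_nonneg.mpr h2⟩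
      · rintro ⟨⟨h1, h2⟩, h3⟩
        exact ⟨h2, sub_nonneg.mp h3, h1.2⟩
    rw [hEq]
    exact hbox.of_isClosed_subset this inter_subset_left
  obtain ⟨⟨y, r⟩, ⟨hr1, hy1, hy2⟩, hmax⟩ := hKc.exists_isMaxOn ⟨(x, t), ht, hx, hxb⟩ hz
  simp only at hr1 hy1 hy2
  have hmax' : ∀ ξ q, q ∈ Icc 0 τ → a q ≤ ξ → ξ ≤ b → z ξ q ≤ z y r := fun ξ q h1 h2 h3 =>
    hmax (show (ξ, q) ∈ K from ⟨h1, h2, h3⟩)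
  refine (hmax' x t ht hx hxb).trans ?_
  rcases hr1.1.eq_or_lt with h | hr0
  · subst h
    exact h0 y hy1 hy2
  rcases hy1.eq_or_lt with h | hy1'
  · rw [← h] at hy2 ⊢
    exact hl r hr1 hy2
  rcases hy2.eq_or_lt with h | hy2'
  · rw [h] at hy1 ⊢
    exact hr r hr1 hy1
  exfalso
  obtain ⟨-, d2, d3, hlt⟩ := hd r ⟨hr0, hr1.2⟩ y ⟨hy1', hy2'⟩
  have e1 : zxx y r ≤ 0 := by
    refine second_deriv_nonpos (g := fun ξ => z ξ r) (g' := fun ξ => zx ξ r) ?_ d2 ?_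
    · filter_upwards [Ioo_mem_nhds hy1' hy2'] with ξ hξ
      exact (hd r ⟨hr0, hr1.2⟩ ξ hξ).1
    · filter_upwards [Ioo_mem_nhds hy1' hy2'] with ξ hξ
      exact hmax' ξ r hr1 hξ.1.le hξ.2.le
  have e2 : 0 ≤ zt y r := by
    refine deriv_nonneg_of_left_max d3 ?_
    have hc : Tendsto a (nhdsWithin r (Icc 0 τ)) (nhds (a r)) := ha r hr1
    have hle : nhdsWithin r (Iio r) ≤ nhdsWithin r (Icc 0 τ) := by
      rw [nhdsWithin_le_iff]
      filter_upwards [Ioo_mem_nhdsLT hr0] with q hq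
      exact ⟨hq.1.le, hq.2.le.trans hr1.2⟩
    filter_upwards [(hc.mono_left hle).eventually_lt_const hy1', Ioo_mem_nhdsLT hr0] with q h1 h2
    exact hmax' y q ⟨h2.1.le, h2.2.le.trans hr1.2⟩ h1.le hy2
  linarith

/-- **No formation of a new phase, one-dimensional case with exponential growth.**
For `N = 1`, `T > 0`, `α > 0`, `lam₀ > 0`, a non-negative measurable heat source `f` with
`sup_x f x t * exp (-lam₀ x)` bounded from above on `(0,T)`, and any initial free boundary
location `s₀`, there is no pair `(u, s)` such that `s` is continuous on `[0,T)`,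
continuously differentiable on `(0,T)` with `s 0 = s₀`, and `u` is a non-negative
classical solution of `∂ₜu - ∂ₓ²u = f` on the moving domain `{x > s t, 0 < t < T}` with
`sup u(x,t) exp (-lam₀ x) < ∞`, continuous together with `∂ₓu` up to the free boundary,
with `u(s t, t) = 0`, `∂ₓu(s t, t) = α`, continuous up to `t = 0` with `u(·,0) ≡ 0`. -/
theorem no_new_phase_one_dimensional_exponential_growth
    (T α lam₀ : ℝ) (hT : 0 < T) (hα : 0 < α) (hlam₀ : 0 < lam₀)
    (f : ℝ → ℝ → ℝ)
    (hf_nonneg : ∀ x : ℝ, ∀ t ∈ Ioo 0 T, 0 ≤ f x t)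
    (hf_grow : ∃ M : ℝ, ∀ x : ℝ, ∀ t ∈ Ioo 0 T, f x t * Real.exp (-lam₀ * x) ≤ M)
    (hf_meas : Measurable fun p : ℝ × ℝ => f p.1 p.2)
    (s₀ : ℝ) :
    ¬ ∃ (u : ℝ → ℝ → ℝ) (s : ℝ → ℝ) (ux uxx : ℝ → ℝ → ℝ),
      -- regularity of the free boundary
      ContinuousOn s (Ico 0 T) ∧
      (∀ t ∈ Ioo 0 T, DifferentiableAt ℝ s t) ∧
      ContinuousOn (deriv s) (Ioo 0 T) ∧
      s 0 = s₀ ∧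
      -- u is a classical solution of the heat equation ∂ₜ u - ∂ₓ² u = f in the moving domain
      (∀ t ∈ Ioo 0 T, ∀ x : ℝ, s t < x →
        HasDerivAt (fun ξ => u ξ t) (ux x t) x ∧
        HasDerivAt (fun ξ => ux ξ t) (uxx x t) x ∧
        HasDerivAt (fun τ => u x τ) (uxx x t + f x t) t) ∧
      -- u is non-negative on the closed moving domain
      (∀ t ∈ Ico 0 T, ∀ x : ℝ, s t ≤ x → 0 ≤ u x t) ∧
      -- exponential growth bound for u: sup_{x, 0<t<T} u(x,t) e^{-lam₀ x} < ∞
      (∃ M : ℝ, ∀ t ∈ Ioo 0 T, ∀ x : ℝ, s t ≤ x → u x t * Real.exp (-lam₀ * x) ≤ M) ∧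
      -- u is continuous up to the free boundary and up to t = 0
      ContinuousOn (fun p : ℝ × ℝ => u p.1 p.2)
        {p : ℝ × ℝ | p.2 ∈ Ico 0 T ∧ s p.2 ≤ p.1} ∧
      -- ∂ₓ u is continuous up to the free boundary
      ContinuousOn (fun p : ℝ × ℝ => ux p.1 p.2)
        {p : ℝ × ℝ | p.2 ∈ Ioo 0 T ∧ s p.2 ≤ p.1} ∧
      -- Dirichlet boundary condition
      (∀ t ∈ Ioo 0 T, u (s t) t = 0) ∧
      -- fixed normal derivative (Neumann) condition ∂u/∂ν = -α, i.e. ∂ₓu = α at x = s t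
      (∀ t ∈ Ioo 0 T, ux (s t) t = α) ∧
      -- zero initial value on [s₀, ∞)
      (∀ x : ℝ, s₀ ≤ x → u x 0 = 0) := by
  rintro ⟨u, s, ux, uxx, hs, -, -, hs0, hu, -, -, huc, huxc, hud, hun, hui⟩
  -- a strict bound for the source near the initial point
  obtain ⟨F, hF, hfF⟩ : ∃ F : ℝ, 0 < F ∧ ∀ t ∈ Ioo 0 T, ∀ x, x ≤ s₀ + 2 → f x t < F := by
    obtain ⟨M, hM⟩ := hf_grow
    refine ⟨|M| * Real.exp (lam₀ * (s₀ + 2)) + 1, by positivity, ?_⟩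
    intro t ht x hx
    have h1 := hM x t ht
    have h2 : f x t = f x t * Real.exp (-lam₀ * x) * Real.exp (lam₀ * x) := by
      rw [mul_assoc, ← Real.exp_add]; simp
    have h3 : Real.exp (lam₀ * x) ≤ Real.exp (lam₀ * (s₀ + 2)) :=
      Real.exp_le_exp.mpr (mul_le_mul_of_nonneg_left hx hlam₀.le)
    have h4 : f x t ≤ |M| * Real.exp (lam₀ * (s₀ + 2)) := by
      rw [h2]
      exact mul_le_mul (h1.trans (le_abs_self M)) h3 (Real.exp_pos _).le (abs_nonneg M)
    linarith
  -- constants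
  obtain ⟨ρ, hρ, hρ1, hρF⟩ : ∃ ρ : ℝ, 0 < ρ ∧ ρ ≤ 1 ∧ F * (2 * ρ) ≤ α / 4 := by
    refine ⟨min 1 (α / (8 * F)), by positivity, min_le_left _ _, ?_⟩
    have h1 : min 1 (α / (8 * F)) ≤ α / (8 * F) := min_le_right _ _
    rw [le_div_iff₀ (by positivity)] at h1
    linarith
  obtain ⟨η, hη, hηρ, hηC⟩ : ∃ η : ℝ, 0 < η ∧ η ≤ ρ / 4 ∧ (F + 2) * η ≤ α / 4 := by
    refine ⟨min (ρ / 4) (α / (4 * (F + 2))), by positivity, min_le_left _ _, ?_⟩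
    have h1 : min (ρ / 4) (α / (4 * (F + 2))) ≤ α / (4 * (F + 2)) := min_le_right _ _
    rw [le_div_iff₀ (by positivity)] at h1
    linarith
  -- short time
  obtain ⟨τ₁, hτ₁, hτ₁T, hsη, hub⟩ : ∃ τ₁ : ℝ, 0 < τ₁ ∧ τ₁ < T ∧
      (∀ t ∈ Icc 0 τ₁, |s t - s₀| ≤ η) ∧ (∀ t ∈ Icc 0 τ₁, u (s₀ + ρ + 1) t ≤ 1) := by
    have h0 : (0:ℝ) ∈ Ico 0 T := ⟨le_rfl, hT⟩
    have hle : nhdsWithin (0:ℝ) (Ici 0) ≤ nhdsWithin 0 (Ico 0 T) := by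
      rw [nhdsWithin_le_iff]
      exact Ico_mem_nhdsGE hT
    have hst : Tendsto s (nhdsWithin 0 (Ici 0)) (nhds s₀) := by
      have : Tendsto s (nhdsWithin 0 (Ico 0 T)) (nhds (s 0)) := hs 0 h0
      rw [hs0] at this
      exact this.mono_left hle
    have e1 : ∀ᶠ t in nhdsWithin (0:ℝ) (Ici 0), |s t - s₀| < η := by
      have := (Metric.tendsto_nhds.mp hst) η hη
      simpa [Real.dist_eq] using this
    have eT : ∀ᶠ t in nhdsWithin (0:ℝ) (Ici 0), t ∈ Ico 0 T := Ico_mem_nhdsGE hT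
    have e2 : ∀ᶠ t in nhdsWithin (0:ℝ) (Ici 0), u (s₀ + ρ + 1) t < 1 := by
      have hmem : ((s₀ + ρ + 1, 0) : ℝ × ℝ) ∈ {p : ℝ × ℝ | p.2 ∈ Ico 0 T ∧ s p.2 ≤ p.1} :=
        ⟨h0, by simp only [hs0]; linarith⟩
      have hc : Tendsto (fun p : ℝ × ℝ => u p.1 p.2) _ (nhds (u (s₀ + ρ + 1) 0)) := huc _ hmem
      rw [hui _ (by linarith)] at hc
      have hpath : Tendsto (fun t : ℝ => ((s₀ + ρ + 1, t) : ℝ × ℝ)) (nhdsWithin 0 (Ici 0))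
          (nhdsWithin (s₀ + ρ + 1, 0) {p : ℝ × ℝ | p.2 ∈ Ico 0 T ∧ s p.2 ≤ p.1}) := by
        refine tendsto_nhdsWithin_iff.mpr ⟨?_, ?_⟩
        · exact ((Continuous.prodMk_right (s₀ + ρ + 1)).tendsto 0).mono_left nhdsWithin_le_nhds
        · filter_upwards [e1, eT] with t h1 h2
          refine ⟨h2, ?_⟩
          have := (abs_lt.mp h1).2
          show s t ≤ s₀ + ρ + 1
          linarith
      exact (hc.comp hpath).eventually_lt_const one_pos
    have e3 := e1.and (e2.and eT)
    obtain ⟨v, hv, hv2⟩ := mem_nhdsGE_iff_exists_Icc_subset.mp e3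
    refine ⟨v, hv, (hv2 ⟨le_of_lt hv, le_rfl⟩).2.2.2, fun t ht => (hv2 ht).1.le,
      fun t ht => (hv2 ht).2.1.le⟩
  obtain ⟨τ, hτ, hττ₁, hτρ, hτF⟩ : ∃ τ : ℝ, 0 < τ ∧ τ ≤ τ₁ ∧ 6 * τ ≤ η * ρ ∧
      2 * F * τ ≤ α * η := by
    refine ⟨min τ₁ (min (η * ρ / 6) (α * η / (2 * F))), by positivity, min_le_left _ _, ?_, ?_⟩
    · have h1 : min τ₁ (min (η * ρ / 6) (α * η / (2 * F))) ≤ η * ρ / 6 :=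
        (min_le_right _ _).trans (min_le_left _ _)
      linarith
    · have h1 : min τ₁ (min (η * ρ / 6) (α * η / (2 * F))) ≤ α * η / (2 * F) :=
        (min_le_right _ _).trans (min_le_right _ _)
      rw [le_div_iff₀ (by positivity)] at h1
      linarith
  have hτT : τ < T := hττ₁.trans_lt hτ₁T
  have hsub : ∀ t ∈ Icc 0 τ, t ∈ Ico 0 T := fun t ht => ⟨ht.1, ht.2.trans_lt hτT⟩
  have hsub' : ∀ t ∈ Ioc 0 τ, t ∈ Ioo 0 T := fun t ht => ⟨ht.1, ht.2.trans_lt hτT⟩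
  have hsc : ContinuousOn s (Icc 0 τ) := hs.mono hsub
  have hsb : ∀ t ∈ Icc 0 τ, s₀ - η ≤ s t ∧ s t ≤ s₀ + η := by
    intro t ht
    have := abs_le.mp (hsη t ⟨ht.1, ht.2.trans hττ₁⟩)
    constructor <;> linarith
  have hus : ∀ t ∈ Icc 0 τ, u (s t) t = 0 := by
    intro t ht
    rcases ht.1.eq_or_lt with h | h
    · subst h
      rw [hs0]
      exact hui _ le_rfl
    · exact hud t ⟨h, (hsub t ht).2⟩
  have hucK : ∀ b : ℝ, ContinuousOn (fun p : ℝ × ℝ => u p.1 p.2)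
      {p : ℝ × ℝ | p.2 ∈ Icc 0 τ ∧ s p.2 ≤ p.1 ∧ p.1 ≤ b} := fun b =>
    huc.mono (fun p hp => ⟨hsub _ hp.1, hp.2.1⟩)
  -- first barrier: linear growth in time at x = s₀ + ρ
  have hlin : ∀ t ∈ Icc 0 τ, u (s₀ + ρ) t ≤ (F + 2) * t := by
    have key := max_principle s (s₀ + ρ + 1) τ hsc
      (fun x t => u x t - ((x - (s₀ + ρ)) ^ 2 + (F + 2) * t))
      (fun x t => ux x t - 2 * (x - (s₀ + ρ)))
      (fun x t => uxx x t - 2)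
      (fun x t => uxx x t + f x t - (F + 2))
      ((hucK _).sub (by fun_prop)) ?_ ?_ ?_ ?_
    · intro t ht
      have h1 := key t ht (s₀ + ρ) (by linarith [(hsb t ht).2]) (by linarith)
      simp only [sub_self] at h1
      linarith
    · intro t ht x hx
      obtain ⟨d1, d2, d3⟩ := hu t (hsub' t ht) x hx.1
      have hid : HasDerivAt (fun ξ : ℝ => ξ - (s₀ + ρ)) 1 x := (hasDerivAt_id x).sub_const _
      refine ⟨?_, ?_, ?_, ?_⟩
      · refine HasDerivAt.congr_deriv (d1.sub ((hid.pow 2).add_const ((F + 2) * t))) ?_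
        simp
      · refine HasDerivAt.congr_deriv (d2.sub (hid.const_mul 2)) ?_
        simp
      · refine HasDerivAt.congr_deriv (d3.sub (((hasDerivAt_id t).const_mul (F + 2)).const_add ((x - (s₀ + ρ)) ^ 2))) ?_
        simp
      · have := hfF t (hsub' t ht) x (by linarith [hx.2])
        linarith
    · intro x hx _
      rw [hs0] at hx
      have := sq_nonneg (x - (s₀ + ρ))
      simp only [hui x hx]
      linarith
    · intro t ht _
      have := sq_nonneg (s t - (s₀ + ρ))
      have h2 : 0 ≤ (F + 2) * t := mul_nonneg (by linarith) ht.1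
      simp only [hus t ht]
      linarith
    · intro t ht _
      have h2 : 0 ≤ (F + 2) * t := mul_nonneg (by linarith) ht.1
      have := hub t ⟨ht.1, ht.2.trans hττ₁⟩
      have h3 : (s₀ + ρ + 1 - (s₀ + ρ)) ^ 2 = 1 := by ring
      simp only [h3]
      linarith
  -- the moving line touching the free boundary from below
  set c : ℝ := η / τ with hc
  have hcpos : 0 < c := by positivity
  have hcτ : c * τ = η := by rw [hc]; field_simp
  obtain ⟨t₁, ht₁, ht₁min⟩ : ∃ t₁ ∈ Ioc 0 τ, ∀ t ∈ Icc 0 τ, s t₁ - c * t₁ ≤ s t - c * t := by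
    have hcont : ContinuousOn (fun t => s t - c * t) (Icc 0 τ) := hsc.sub (by fun_prop)
    obtain ⟨q, hq, hqmin⟩ := isCompact_Icc.exists_isMinOn ⟨(0:ℝ), le_rfl, hτ.le⟩ hcont
    have hqmin' : ∀ t ∈ Icc 0 τ, s q - c * q ≤ s t - c * t := fun t ht => hqmin ht
    rcases hq.1.eq_or_lt with h | h
    · refine ⟨τ, ⟨hτ, le_rfl⟩, fun t ht => ?_⟩
      have h1 := hqmin' t ht
      rw [← h, hs0] at h1
      have h2 := (hsb τ ⟨hτ.le, le_rfl⟩).2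
      linarith
    · exact ⟨q, ⟨h, hq.2⟩, hqmin'⟩
  have ht₁' : t₁ ∈ Icc 0 τ := ⟨ht₁.1.le, ht₁.2⟩
  set m : ℝ := s t₁ - c * t₁ with hm
  have hctle : ∀ t ∈ Icc 0 τ, 0 ≤ c * t ∧ c * t ≤ η := fun t ht =>
    ⟨mul_nonneg hcpos.le ht.1, hcτ ▸ mul_le_mul_of_nonneg_left ht.2 hcpos.le⟩
  have hm1 : m ≤ s₀ := by
    have := ht₁min 0 ⟨le_rfl, hτ.le⟩
    rw [hs0] at this
    linarith
  have hm2 : s₀ - 2 * η ≤ m := by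
    have h1 := (hsb t₁ ht₁').1
    have h2 := (hctle t₁ ht₁').2
    linarith
  have hcF : 2 * F ≤ α * c := by
    rw [hc, ← mul_div_assoc, le_div_iff₀ hτ]
    linarith
  have hcρ : 6 ≤ c * ρ := by
    rw [hc, div_mul_eq_mul_div, le_div_iff₀ hτ]
    linarith
  have hexp : ∀ y : ℝ, 0 ≤ y → Real.exp (-y) * (1 + y) ≤ 1 := by
    intro y hy
    have h1 := Real.add_one_le_exp y
    have h2 : Real.exp (-y) * Real.exp y = 1 := by rw [← Real.exp_add]; simp
    have h3 := Real.exp_pos (-y)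
    nlinarith
  -- the profile
  have hprof0 : ∀ ξ : ℝ, 0 ≤ ξ → ξ ≤ 2 * ρ →
      0 ≤ (1 / c) * (α * (1 - Real.exp (-(c * ξ))) - F * ξ) := by
    intro ξ h1 h2
    refine mul_nonneg (by positivity) ?_
    have hy : 0 ≤ c * ξ := by positivity
    have h3 := hexp (c * ξ) hy
    have h4 : F * ξ ≤ α / 4 := le_trans (mul_le_mul_of_nonneg_left h2 hF.le) hρF
    have h5 : F * (1 + c * ξ) ≤ α * c := by nlinarith
    have h6 : F * ξ * (1 + c * ξ) ≤ α * (c * ξ) := by nlinarith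
    have h7 : α * (c * ξ) ≤ α * (1 - Real.exp (-(c * ξ))) * (1 + c * ξ) := by nlinarith
    have h8 : F * ξ ≤ α * (1 - Real.exp (-(c * ξ))) :=
      le_of_mul_le_mul_right (h6.trans h7) (by linarith)
    linarith
  have hprofR : ∀ ξ : ℝ, ρ / 2 ≤ ξ → ξ ≤ 2 * ρ →
      (F + 2) * τ ≤ (1 / c) * (α * (1 - Real.exp (-(c * ξ))) - F * ξ) := by
    intro ξ h1 h2
    have h4 : F * ξ ≤ α / 4 := le_trans (mul_le_mul_of_nonneg_left h2 hF.le) hρF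
    have hy : 3 ≤ c * ξ := by nlinarith
    have h3 := hexp (c * ξ) (by linarith)
    have h5 : Real.exp (-(c * ξ)) ≤ 1 / 4 := by
      have := Real.exp_pos (-(c * ξ))
      nlinarith
    have h6 : α * Real.exp (-(c * ξ)) ≤ α * (1 / 4) := mul_le_mul_of_nonneg_left h5 hα.le
    rw [one_div, ← div_eq_inv_mul, le_div_iff₀ hcpos]
    have h7 : (F + 2) * τ * c = (F + 2) * η := by rw [← hcτ]; ring
    rw [h7]
    linarith
  -- second barrier
  have hcmp := max_principle s (s₀ + ρ) τ hsc
      (fun x t => u x t - (1 / c) * (α * (1 - Real.exp (-(c * (x - m - c * t)))) - F * (x - m - c * t)))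
      (fun x t => ux x t - (α * Real.exp (-(c * (x - m - c * t))) - F / c))
      (fun x t => uxx x t + α * c * Real.exp (-(c * (x - m - c * t))))
      (fun x t => uxx x t + f x t - (-(c * α * Real.exp (-(c * (x - m - c * t)))) + F))
      ((hucK _).sub (by fun_prop)) ?_ ?_ ?_ ?_
  rotate_left
  · intro t ht x hx
    obtain ⟨d1, d2, d3⟩ := hu t (hsub' t ht) x hx.1
    have hid : HasDerivAt (fun ξ : ℝ => ξ - m - c * t) 1 x :=
      ((hasDerivAt_id x).sub_const m).sub_const _
    have hit : HasDerivAt (fun r : ℝ => x - m - c * r) (-c) t := by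
      refine HasDerivAt.congr_deriv (((hasDerivAt_id t).const_mul c).const_sub (x - m)) ?_
      simp
    have hex := ((hid.const_mul c).neg).exp
    have het := ((hit.const_mul c).neg).exp
    refine ⟨?_, ?_, ?_, ?_⟩
    · refine HasDerivAt.congr_deriv (d1.sub ((((hex.const_sub 1).const_mul α).sub (hid.const_mul F)).const_mul (1 / c))) ?_
      field_simp
      simp
    · refine HasDerivAt.congr_deriv (d2.sub ((hex.const_mul α).sub_const (F / c))) ?_
      simp
      ring
    · refine HasDerivAt.congr_deriv (d3.sub ((((het.const_sub 1).const_mul α).sub (hit.const_mul F)).const_mul (1 / c))) ?_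
      field_simp
      simp
    · have := hfF t (hsub' t ht) x (by linarith [hx.2])
      linarith
  · intro x hx hxb
    rw [hs0] at hx
    have := hprof0 (x - m - c * 0) (by linarith) (by linarith)
    simp only [hui x hx]
    linarith
  · intro t ht _
    have h1 := ht₁min t ht
    have h2 := (hsb t ht).2
    have := hprof0 (s t - m - c * t) (by linarith) (by linarith [(hctle t ht).1])
    simp only [hus t ht]
    linarith
  · intro t ht _
    have h1 := hctle t ht
    have := hprofR (s₀ + ρ - m - c * t) (by linarith) (by linarith)
    have h2 := hlin t ht
    have h3 : (F + 2) * t ≤ (F + 2) * τ := mul_le_mul_of_nonneg_left ht.2 (by linarith)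
    linarith
  -- contradiction at the touching point
  have ht₁T := hsub' t₁ ht₁
  have hsR : s t₁ < s₀ + ρ := by linarith [(hsb t₁ ht₁').2]
  have hmt : s t₁ = m + c * t₁ := by rw [hm]; ring
  have hFc : 0 < F / c := by positivity
  have hev : ∀ᶠ x in nhdsWithin (s t₁) (Ici (s t₁)), α - F / c < ux x t₁ := by
    have hmem : ((s t₁, t₁) : ℝ × ℝ) ∈ {p : ℝ × ℝ | p.2 ∈ Ioo 0 T ∧ s p.2 ≤ p.1} :=
      ⟨ht₁T, le_rfl⟩
    have hcx : Tendsto (fun p : ℝ × ℝ => ux p.1 p.2) _ (nhds (ux (s t₁) t₁)) := huxc _ hmem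
    rw [hun t₁ ht₁T] at hcx
    have hpath : Tendsto (fun x : ℝ => ((x, t₁) : ℝ × ℝ)) (nhdsWithin (s t₁) (Ici (s t₁)))
        (nhdsWithin (s t₁, t₁) {p : ℝ × ℝ | p.2 ∈ Ioo 0 T ∧ s p.2 ≤ p.1}) := by
      refine tendsto_nhdsWithin_iff.mpr ⟨?_, ?_⟩
      · exact ((Continuous.prodMk_left t₁).tendsto (s t₁)).mono_left nhdsWithin_le_nhds
      · filter_upwards [self_mem_nhdsWithin] with x hx
        exact ⟨ht₁T, hx⟩
    exact (hcx.comp hpath).eventually_const_lt (by linarith)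
  obtain ⟨y, hy, hy2⟩ := mem_nhdsGE_iff_exists_Icc_subset.mp
    (hev.and (Icc_mem_nhdsGE hsR))
  have hy' : s t₁ < y := hy
  let g : ℝ → ℝ := fun x => u x t₁ -
    (1 / c) * (α * (1 - Real.exp (-(c * (x - m - c * t₁)))) - F * (x - m - c * t₁))
  have hgd : ∀ x, s t₁ < x →
      HasDerivAt g (ux x t₁ - (α * Real.exp (-(c * (x - m - c * t₁))) - F / c)) x := by
    intro x hx
    have d1 := (hu t₁ ht₁T x hx).1
    have hid : HasDerivAt (fun ξ : ℝ => ξ - m - c * t₁) 1 x :=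
      ((hasDerivAt_id x).sub_const m).sub_const _
    have hex := ((hid.const_mul c).neg).exp
    refine HasDerivAt.congr_deriv (d1.sub ((((hex.const_sub 1).const_mul α).sub (hid.const_mul F)).const_mul (1 / c))) ?_
    field_simp
    simp
  have hgc : ContinuousOn g (Icc (s t₁) y) := by
    refine ContinuousOn.sub ?_ (by fun_prop)
    exact huc.comp (f := fun x : ℝ => ((x, t₁) : ℝ × ℝ)) (by fun_prop)
      (fun x hx => ⟨⟨ht₁T.1.le, ht₁T.2⟩, hx.1⟩)
  have hmono : StrictMonoOn g (Icc (s t₁) y) := by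
    refine strictMonoOn_of_deriv_pos (convex_Icc _ _) hgc ?_
    intro x hx
    rw [interior_Icc] at hx
    rw [(hgd x hx.1).deriv]
    have h1 := (hy2 ⟨hx.1.le, hx.2.le⟩).1
    have h2 : Real.exp (-(c * (x - m - c * t₁))) ≤ 1 := by
      refine Real.exp_le_one_iff.mpr (neg_nonpos.mpr (mul_nonneg hcpos.le ?_))
      linarith [hx.1]
    have h3 : α * Real.exp (-(c * (x - m - c * t₁))) ≤ α * 1 := mul_le_mul_of_nonneg_left h2 hα.le
    have h1' : α - F / c < ux x t₁ := h1
    linarith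
  have hlt := hmono ⟨le_rfl, hy'.le⟩ ⟨hy'.le, le_rfl⟩ hy'
  have hg0 : g (s t₁) = 0 := by
    have h1 : s t₁ - m - c * t₁ = 0 := by linarith
    simp only [g, h1, hus t₁ ht₁']
    simp
  have hgy : g y ≤ 0 := hcmp t₁ ht₁' y hy'.le (hy2 ⟨hy'.le, le_rfl⟩).2.2
  linarith
end

section
/- Let α > 0 and h > 0. Consider the free boundary problem ∂_t u − ∂_x² u = h/√t on {(x,t) : x > s(t), 0 < t < T}, u(s(t),t) = 0, ∂_x u(s(t),t) = α, with initial domain D_0 = (0,∞) and initial value u(·,0) ≡ 0. Then there exists a unique bounded solution of self-similar form u(x,t) = √t · w(x/√t), s(t) = σ√t with a constant σ ∈ ℝ and w bounded. Moreover, the map h ↦ σ(h) is strictly decreasing and smooth, σ(α/√π) = 0, and σ(h) < 0 if and only if h > α/√π, while σ(h) > 0 if and only if h < α/√π. -/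
set_option autoImplicit false

open Set Filter

/-- The self-similar ansatz `u(x,t) = √t · w(x/√t)`. -/
noncomputable def selfSimilarU (w : ℝ → ℝ) (x t : ℝ) : ℝ :=
  Real.sqrt t * w (x / Real.sqrt t)

/-- `(u, s)` with `u(x,t) = √t·w(x/√t)`, `s(t) = σ√t` is a bounded non-negative solution
of the free boundary problem `∂ₜu - ∂ₓ²u = h/√t` on `{x > s t, t > 0}`, `u(s t, t) = 0`,
`∂ₓu(s t, t) = α` (one-sided), with initial domain `(0,∞)` and zero initial value. -/
def IsSelfSimilarSolution (α h σ : ℝ) (w : ℝ → ℝ) : Prop :=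
  -- w (hence u) is bounded
  (∃ M : ℝ, ∀ y : ℝ, σ ≤ y → |w y| ≤ M) ∧
  -- u is a classical solution of ∂ₜ u - ∂ₓ² u = h/√t for x > σ√t, t > 0
  (∀ t : ℝ, 0 < t → ∀ x : ℝ, σ * Real.sqrt t < x →
    DifferentiableAt ℝ (fun ξ => selfSimilarU w ξ t) x ∧
    DifferentiableAt ℝ (deriv (fun ξ => selfSimilarU w ξ t)) x ∧
    HasDerivAt (fun τ => selfSimilarU w x τ)
      (deriv (deriv (fun ξ => selfSimilarU w ξ t)) x + h / Real.sqrt t) t) ∧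
  -- u is non-negative on the closed moving domain
  (∀ t : ℝ, 0 < t → ∀ x : ℝ, σ * Real.sqrt t ≤ x → 0 ≤ selfSimilarU w x t) ∧
  -- Dirichlet condition u(s t, t) = 0
  (∀ t : ℝ, 0 < t → selfSimilarU w (σ * Real.sqrt t) t = 0) ∧
  -- Neumann condition ∂ₓu(s t, t) = α (one-sided spatial derivative)
  (∀ t : ℝ, 0 < t →
    derivWithin (fun ξ => selfSimilarU w ξ t) (Ici (σ * Real.sqrt t)) (σ * Real.sqrt t)
      = α) ∧
  -- zero initial value, attained uniformly as t ↓ 0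
  (∀ ε > 0, ∃ δ > 0, ∀ t : ℝ, 0 < t → t < δ → ∀ x : ℝ, σ * Real.sqrt t ≤ x →
    |selfSimilarU w x t| ≤ ε)

open Topology

noncomputable def phF (y : ℝ) : ℝ := Real.exp (-(1/4) * y^2)
noncomputable def EF (y : ℝ) : ℝ := Real.sqrt Real.pi - ∫ x in (0:ℝ)..y, phF x
noncomputable def gF (y : ℝ) : ℝ := 2 * phF y - y * EF y

lemma phF_pos (y : ℝ) : 0 < phF y := Real.exp_pos _

lemma phF_cd : ContDiff ℝ (⊤ : ℕ∞) phF := by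
  unfold phF; fun_prop

lemma phF_deriv (y : ℝ) : HasDerivAt phF (-(y/2) * phF y) y := by
  have h : HasDerivAt (fun y : ℝ => -(1/4) * y^2) (-(1/4) * (2 * y)) y := by
    simpa using (hasDerivAt_pow 2 y).const_mul (-(1/4:ℝ))
  have h2 := h.exp
  unfold phF
  refine (h2).congr_deriv ?_
  ring

lemma EF_deriv (y : ℝ) : HasDerivAt EF (-phF y) y := by
  have hc := phF_cd.continuous
  have := (hc.integral_hasStrictDerivAt 0 y).hasDerivAt
  exact this.const_sub _

lemma EF_cd : ContDiff ℝ (⊤ : ℕ∞) EF := by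
  rw [contDiff_infty_iff_deriv]
  refine ⟨fun y => (EF_deriv y).differentiableAt, ?_⟩
  have : deriv EF = fun y => -phF y := funext fun y => (EF_deriv y).deriv
  rw [this]
  exact phF_cd.neg

lemma gF_cd : ContDiff ℝ (⊤ : ℕ∞) gF := by
  have h1 := EF_cd
  have h2 := phF_cd
  unfold gF; fun_prop

lemma gF_deriv (y : ℝ) : HasDerivAt gF (-EF y) y := by
  have := ((phF_deriv y).const_mul 2).sub ((hasDerivAt_id y).mul (EF_deriv y))
  refine (this).congr_deriv ?_
  simp; ring

lemma EF_zero : EF 0 = Real.sqrt Real.pi := by simp [EF]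
lemma gF_zero : gF 0 = 2 := by simp [gF, phF]

lemma EF_tendsto : Tendsto EF atTop (𝓝 0) := by
  have h1 : MeasureTheory.IntegrableOn phF (Ioi 0) :=
    (integrable_exp_neg_mul_sq (by norm_num : (0:ℝ) < 1/4)).integrableOn
  have h2 := MeasureTheory.intervalIntegral_tendsto_integral_Ioi 0 h1 tendsto_id
  have h3 : ∫ x in Ioi (0:ℝ), phF x = Real.sqrt Real.pi := by
    have := integral_gaussian_Ioi (1/4)
    unfold phF
    rw [this, show Real.pi / (1/4) = 2^2 * Real.pi by ring, Real.sqrt_mul (by norm_num),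
      Real.sqrt_sq (by norm_num)]
    ring
  rw [h3] at h2
  have := h2.const_sub (Real.sqrt Real.pi)
  refine (this.congr fun y => rfl).trans (by simp)

lemma pos_of_deriv {f f' : ℝ → ℝ} (hf : ∀ y, HasDerivAt f (f' y) y) (hneg : ∀ y, f' y < 0)
    (ht : Tendsto f atTop (𝓝 0)) (y : ℝ) : 0 < f y := by
  have hs : StrictAnti f := strictAnti_of_hasDerivAt_neg hf hneg
  have h1 := hs.antitone.le_of_tendsto ht (y+1)
  have h2 := hs (show y < y + 1 by linarith)
  linarith

lemma EF_pos (y : ℝ) : 0 < EF y :=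
  pos_of_deriv EF_deriv (fun y => by linarith [phF_pos y]) EF_tendsto y

lemma phF_le {y : ℝ} (hy : 4 ≤ y) : phF y ≤ Real.exp (-y) := by
  unfold phF
  apply Real.exp_le_exp.2
  nlinarith

lemma pow_phF_tendsto (n : ℕ) : Tendsto (fun y => y^n * phF y) atTop (𝓝 0) := by
  refine squeeze_zero' ?_ ?_ (Real.tendsto_pow_mul_exp_neg_atTop_nhds_zero n)
  · filter_upwards [eventually_ge_atTop 4] with y hy
    have := phF_pos y
    positivity
  · filter_upwards [eventually_ge_atTop 4] with y hy
    have := phF_le hy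
    gcongr

lemma EF_le {y : ℝ} (hy : 4 ≤ y) : EF y ≤ phF y := by
  have hd : ∀ y, HasDerivAt (fun y => phF y - EF y) (-(y/2) * phF y - -phF y) y :=
    fun y => (phF_deriv y).sub (EF_deriv y)
  have ha : AntitoneOn (fun y => phF y - EF y) (Ici 4) := by
    apply antitoneOn_of_deriv_nonpos (convex_Ici 4)
    · exact fun y _ => (hd y).continuousAt.continuousWithinAt
    · exact fun y _ => (hd y).differentiableAt.differentiableWithinAt
    · intro y hy
      rw [(hd y).deriv]
      simp at hy
      nlinarith [phF_pos y]
  have ht : Tendsto (fun y => phF y - EF y) atTop (𝓝 0) := by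
    have := (pow_phF_tendsto 0).sub EF_tendsto
    simpa using this
  have : 0 ≤ phF y - EF y := by
    refine le_of_tendsto ht ?_
    filter_upwards [eventually_ge_atTop y] with z hz
    exact ha hy (le_trans hy hz) hz
  linarith

lemma pow_EF_tendsto (n : ℕ) : Tendsto (fun y => y^n * EF y) atTop (𝓝 0) := by
  refine squeeze_zero' ?_ ?_ (pow_phF_tendsto n)
  · filter_upwards [eventually_ge_atTop 4] with y hy
    have := EF_pos y
    positivity
  · filter_upwards [eventually_ge_atTop 4] with y hy
    have := EF_le hy
    gcongr

lemma gF_tendsto : Tendsto gF atTop (𝓝 0) := by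
  have := ((pow_phF_tendsto 0).const_mul 2).sub (pow_EF_tendsto 1)
  simp only [pow_zero, pow_one, one_mul, mul_zero, sub_zero] at this
  exact this

lemma gF_pos (y : ℝ) : 0 < gF y :=
  pos_of_deriv gF_deriv (fun y => by linarith [EF_pos y]) gF_tendsto y

lemma gF_anti : StrictAnti gF :=
  strictAnti_of_hasDerivAt_neg gF_deriv (fun y => by linarith [EF_pos y])

lemma K_pos (y : ℝ) : 0 < EF y - y/2 * gF y := by
  refine pos_of_deriv (f := fun y => EF y - y/2 * gF y) (f' := fun y => - gF y) ?_
    (fun y => by linarith [gF_pos y]) ?_ y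
  · intro y
    have := (EF_deriv y).sub (((hasDerivAt_id y).div_const 2).mul (gF_deriv y))
    refine (this).congr_deriv ?_
    simp [gF]; ring
  · have := ((pow_EF_tendsto 0).sub (pow_phF_tendsto 1)).add ((pow_EF_tendsto 2).div_const 2)
    simp at this
    refine this.congr fun y => ?_
    simp [gF]; ring

lemma F_pos (y : ℝ) : 0 < EF y ^ 2 - gF y * phF y := by
  refine pos_of_deriv (f := fun y => EF y ^ 2 - gF y * phF y)
    (f' := fun y => - phF y * (EF y - y/2 * gF y)) ?_
    (fun y => by nlinarith [K_pos y, phF_pos y, mul_pos (K_pos y) (phF_pos y)]) ?_ y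
  · intro y
    have := ((EF_deriv y).pow 2).sub ((gF_deriv y).mul (phF_deriv y))
    refine (this).congr_deriv ?_
    simp; ring
  · have := (EF_tendsto.pow 2).sub (gF_tendsto.mul (pow_phF_tendsto 0))
    simpa using this

noncomputable def LF (y : ℝ) : ℝ := Real.log (EF y) - Real.log (gF y)

lemma LF_cd : ContDiff ℝ (⊤ : ℕ∞) LF := by
  exact (EF_cd.log fun y => (EF_pos y).ne').sub (gF_cd.log fun y => (gF_pos y).ne')

lemma LF_deriv (y : ℝ) :
    HasDerivAt LF ((EF y ^ 2 - gF y * phF y) / (EF y * gF y)) y := by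
  have h1 := (EF_pos y).ne'
  have h2 := (gF_pos y).ne'
  have := ((EF_deriv y).log h1).sub ((gF_deriv y).log h2)
  refine (this).congr_deriv ?_
  field_simp
  ring

lemma LF_deriv_pos (y : ℝ) : 0 < (EF y ^ 2 - gF y * phF y) / (EF y * gF y) :=
  div_pos (F_pos y) (mul_pos (EF_pos y) (gF_pos y))

lemma LF_mono : StrictMono LF := strictMono_of_hasDerivAt_pos LF_deriv LF_deriv_pos

lemma LF_eq (y : ℝ) : LF y = Real.log (EF y / gF y) :=
  (Real.log_div (EF_pos y).ne' (gF_pos y).ne').symm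

lemma LF_top : Tendsto LF atTop atTop := by
  have h : Tendsto (fun y : ℝ => Real.log (y/2)) atTop atTop :=
    Real.tendsto_log_atTop.comp (tendsto_id.atTop_div_const (by norm_num))
  refine tendsto_atTop_mono' _ ?_ h
  filter_upwards [eventually_gt_atTop 0] with y hy
  rw [LF_eq]
  apply Real.log_le_log (by positivity)
  rw [le_div_iff₀ (gF_pos y)]
  linarith [K_pos y]

lemma LF_bot : Tendsto LF atBot atBot := by
  have h : Tendsto (fun y : ℝ => - Real.log (-y)) atBot atBot :=
    tendsto_neg_atTop_atBot.comp (Real.tendsto_log_atTop.comp tendsto_neg_atBot_atTop)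
  refine tendsto_atBot_mono' _ ?_ h
  filter_upwards [eventually_lt_atBot 0] with y hy
  rw [LF_eq, ← Real.log_inv]
  apply Real.log_le_log (div_pos (EF_pos y) (gF_pos y))
  rw [div_le_iff₀ (gF_pos y), inv_mul_eq_div, le_div_iff₀ (by linarith)]
  unfold gF
  linarith [phF_pos y]

noncomputable def LIso : ℝ ≃o ℝ :=
  LF_mono.orderIsoOfSurjective LF (LF_cd.continuous.surjective LF_top LF_bot)

lemma LIso_apply (y : ℝ) : LIso y = LF y := rfl

lemma LIso_symm_cd : ContDiff ℝ (⊤ : ℕ∞) LIso.symm := by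
  have := Homeomorph.contDiff_symm_deriv (𝕜 := ℝ) (n := (⊤ : ℕ∞)) (f := LIso.toHomeomorph)
    (fun y => (LF_deriv_pos y).ne') LF_deriv LF_cd
  exact this

noncomputable def sigF (α h : ℝ) : ℝ := LIso.symm (Real.log (α / 2) - Real.log h)

lemma sigF_iff {α h σ : ℝ} (hα : 0 < α) (hh : 0 < h) :
    σ = sigF α h ↔ 2 * h * EF σ = α * gF σ := by
  have h1 := (EF_pos σ)
  have h2 := (gF_pos σ)
  unfold sigF
  rw [← Real.log_div (by positivity) hh.ne', OrderIso.eq_symm_apply, LIso_apply, LF_eq,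
    Real.log_injOn_pos.eq_iff (div_pos h1 h2) (by simp; positivity)]
  field_simp

noncomputable def wF (h σ y : ℝ) : ℝ := 2 * h - 2 * h / gF σ * gF y

lemma wF_deriv (h σ y : ℝ) : HasDerivAt (wF h σ) (2 * h / gF σ * EF y) y := by
  have := ((gF_deriv y).const_mul (2 * h / gF σ)).const_sub (2 * h)
  refine (this).congr_deriv ?_
  ring

lemma wF_self (h σ : ℝ) : wF h σ σ = 0 := by
  have := (gF_pos σ).ne'
  unfold wF; field_simp; ring

lemma wF_bd {h σ y : ℝ} (hh : 0 < h) (hy : σ ≤ y) : 0 ≤ wF h σ y ∧ wF h σ y ≤ 2 * h := by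
  have h1 := gF_pos σ
  have h2 := gF_pos y
  have h3 := gF_anti.antitone hy
  have : gF y / gF σ ≤ 1 := (div_le_one h1).2 h3
  have h4 : 0 < gF y / gF σ := by positivity
  have h5 : wF h σ y = 2 * h * (1 - gF y / gF σ) := by unfold wF; ring
  rw [h5]
  constructor <;> nlinarith

lemma ss_x {w w' : ℝ → ℝ} (t x : ℝ) (ht : 0 < t)
    (hw : HasDerivAt w (w' (x / √t)) (x / √t)) :
    HasDerivAt (fun ξ => selfSimilarU w ξ t) (w' (x / √t)) x := by
  have hs : √t ≠ 0 := (Real.sqrt_pos.2 ht).ne'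
  have h1 : HasDerivAt (fun ξ : ℝ => ξ / √t) (1 / √t) x := (hasDerivAt_id x).div_const _
  have h2 := (HasDerivAt.comp x hw h1).const_mul (√t)
  unfold selfSimilarU
  refine (h2).congr_deriv ?_
  field_simp

lemma ss_t {w : ℝ → ℝ} {d : ℝ} (t x : ℝ) (ht : 0 < t)
    (hw : HasDerivAt w d (x / √t)) :
    HasDerivAt (fun τ => selfSimilarU w x τ)
      ((w (x / √t) / 2 - (x / √t) / 2 * d) / √t) t := by
  have hs : √t ≠ 0 := (Real.sqrt_pos.2 ht).ne'
  have h0 : HasDerivAt (fun τ : ℝ => √τ) (1 / (2 * √t)) t := Real.hasDerivAt_sqrt ht.ne'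
  have h1 : HasDerivAt (fun τ : ℝ => x / √τ) _ t := (hasDerivAt_const t x).div h0 hs
  have h2 := h0.mul (HasDerivAt.comp t hw h1)
  unfold selfSimilarU
  refine (h2).congr_deriv ?_
  simp only [Function.comp]
  field_simp
  ring

lemma wF_sol {α h σ : ℝ} (hh : 0 < h) (hσ : 2 * h * EF σ = α * gF σ) :
    IsSelfSimilarSolution α h σ (wF h σ) := by
  have hx : ∀ t x : ℝ, 0 < t → HasDerivAt (fun ξ => selfSimilarU (wF h σ) ξ t)
      (2 * h / gF σ * EF (x / √t)) x := fun t x ht =>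
    ss_x (w' := fun y => 2 * h / gF σ * EF y) t x ht (wF_deriv _ _ _)
  have hdom : ∀ t x : ℝ, 0 < t → σ * √t ≤ x → σ ≤ x / √t := fun t x ht hxt => by
    rwa [le_div_iff₀ (Real.sqrt_pos.2 ht)]
  refine ⟨⟨2 * h, fun y hy => ?_⟩, ?_, ?_, ?_, ?_, ?_⟩
  · obtain ⟨h1, h2⟩ := wF_bd hh hy
    rw [abs_of_nonneg h1]; exact h2
  · intro t ht x hxt
    have hs : 0 < √t := (Real.sqrt_pos.2 ht)
    have hde : deriv (fun ξ => selfSimilarU (wF h σ) ξ t)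
        = fun x => 2 * h / gF σ * EF (x / √t) := funext fun x => (hx t x ht).deriv
    have hd2 : HasDerivAt (fun x => 2 * h / gF σ * EF (x / √t))
        (2 * h / gF σ * (- phF (x / √t) * (1 / √t))) x := by
      have h1 : HasDerivAt (fun ξ : ℝ => ξ / √t) (1 / √t) x := (hasDerivAt_id x).div_const _
      exact (HasDerivAt.comp x (EF_deriv _) h1).const_mul _
    refine ⟨(hx t x ht).differentiableAt, ?_, ?_⟩
    · rw [hde]; exact hd2.differentiableAt
    · rw [hde, hd2.deriv]
      have := ss_t t x ht (wF_deriv h σ (x / √t))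
      refine (this).congr_deriv ?_
      have := (gF_pos σ).ne'
      generalize x / √t = z
      unfold wF
      rw [show gF z = 2 * phF z - z * EF z from rfl]
      field_simp
      ring
  · intro t ht x hxt
    exact mul_nonneg (Real.sqrt_nonneg _) (wF_bd hh (hdom t x ht hxt)).1
  · intro t ht
    have hs : √t ≠ 0 := (Real.sqrt_pos.2 ht).ne'
    unfold selfSimilarU
    rw [mul_div_cancel_right₀ _ hs, wF_self, mul_zero]
  · intro t ht
    have hs : √t ≠ 0 := (Real.sqrt_pos.2 ht).ne'
    rw [(hx t _ ht).hasDerivWithinAt.derivWithin (uniqueDiffOn_Ici _ _ self_mem_Ici),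
      mul_div_cancel_right₀ _ hs]
    have := (gF_pos σ).ne'
    field_simp
    linarith
  · intro ε hε
    refine ⟨(ε / (2 * h))^2, by positivity, fun t ht htd x hxt => ?_⟩
    obtain ⟨h1, h2⟩ := wF_bd hh (hdom t x ht hxt)
    have h3 : √t ≤ ε / (2 * h) := by
      rw [Real.sqrt_le_left (by positivity)]; exact htd.le
    unfold selfSimilarU
    rw [abs_of_nonneg (mul_nonneg (Real.sqrt_nonneg _) h1)]
    calc √t * wF h σ (x / √t) ≤ ε / (2 * h) * (2 * h) := by gcongr
      _ = ε := by field_simp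

lemma const_on_Ioi {f : ℝ → ℝ} {σ : ℝ} (hf : ∀ y, σ < y → HasDerivAt f 0 y) :
    ∃ c, ∀ y, σ < y → f y = c := by
  refine ⟨f (σ + 1), fun y hy => ?_⟩
  exact (convex_Ioi σ).is_const_of_fderivWithin_eq_zero (𝕜 := ℝ) (f := f)
    (fun z hz => (hf z hz).differentiableAt.differentiableWithinAt)
    (fun z hz => by
      rw [fderivWithin_of_isOpen isOpen_Ioi hz]
      ext; simp [(hf z hz).deriv]) hy (by simp)

lemma sol_unique {α h σ : ℝ} {w : ℝ → ℝ} (hα : 0 < α) 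
    (H : IsSelfSimilarSolution α h σ w) :
    2 * h * EF σ = α * gF σ ∧ ∀ y, σ ≤ y → w y = wF h σ y := by
  obtain ⟨⟨M, hM⟩, hpde, -, h0, h1, -⟩ := H
  have hU : (fun ξ => selfSimilarU w ξ 1) = w := by
    funext ξ; simp [selfSimilarU]
  have h0' : w σ = 0 := by simpa [selfSimilarU] using h0 1 one_pos
  have h1' : derivWithin w (Ici σ) σ = α := by
    have := h1 1 one_pos
    rw [hU] at this
    simpa using this
  have hp : ∀ y, σ < y → HasDerivAt w (deriv w y) y ∧
      HasDerivAt (deriv w) (w y / 2 - y / 2 * deriv w y - h) y := by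
    intro y hy
    obtain ⟨a, b, c⟩ := hpde 1 one_pos y (by simpa using hy)
    rw [hU] at a b c
    refine ⟨a.hasDerivAt, ?_⟩
    have hd : HasDerivAt w (deriv w y) (y / √1) := by simpa using a.hasDerivAt
    have := c.unique (ss_t 1 y one_pos hd)
    simp at this
    refine (b.hasDerivAt).congr_deriv ?_
    linarith
  -- constants of integration
  obtain ⟨A, hA⟩ : ∃ c, ∀ y, σ < y →
      (deriv w y * gF y + (w y - 2 * h) * EF y) / phF y = c := by
    apply const_on_Ioi
    intro y hy
    obtain ⟨d1, d2⟩ := hp y hy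
    have hph := (phF_pos y).ne'
    have := ((d2.mul (gF_deriv y)).add ((d1.sub_const (2*h)).mul (EF_deriv y))).div
      (phF_deriv y) hph
    refine (this).congr_deriv ?_
    simp only [Pi.add_apply, Pi.mul_apply, gF]
    field_simp
    ring
  obtain ⟨B, hB⟩ : ∃ c, ∀ y, σ < y →
      (deriv w y * y - (w y - 2 * h)) / phF y = c := by
    apply const_on_Ioi
    intro y hy
    obtain ⟨d1, d2⟩ := hp y hy
    have hph := (phF_pos y).ne'
    have := ((d2.mul (hasDerivAt_id y)).sub (d1.sub_const (2*h))).div (phF_deriv y) hph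
    refine (this).congr_deriv ?_
    simp only [Pi.sub_apply, Pi.mul_apply, id]
    field_simp
    ring
  have hw : ∀ y, σ < y → w y = 2 * h + (A * y - B * gF y) / 2 := by
    intro y hy
    have a := hA y hy
    have b := hB y hy
    have hph := (phF_pos y).ne'
    rw [div_eq_iff hph] at a b
    have hg : gF y = 2 * phF y - y * EF y := rfl
    have : phF y * (2 * (w y - 2 * h)) = phF y * (A * y - B * gF y) := by
      linear_combination y * a - gF y * b - (w y - 2 * h) * hg
    have := mul_left_cancel₀ hph this
    linarith
  have hA0 : A = 0 := by
    have hg : Tendsto (fun y => (2 * (M + 2 * |h|) + |B| * gF y) / y) atTop (𝓝 0) :=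
      Tendsto.div_atTop ((gF_tendsto.const_mul |B|).const_add _) tendsto_id
    have : |A| ≤ 0 := by
      refine ge_of_tendsto hg ?_
      filter_upwards [eventually_gt_atTop σ, eventually_gt_atTop 0] with y hy hy0
      rw [le_div_iff₀ hy0]
      have e := hw y hy
      have e2 : A * y = 2 * w y - 4 * h + B * gF y := by linarith
      have e3 : |A| * y = |2 * w y - 4 * h + B * gF y| := by
        rw [← e2, abs_mul, abs_of_pos hy0]
      rw [e3]
      have m := hM y hy.le
      have g1 : |B * gF y| = |B| * gF y := by rw [abs_mul, abs_of_pos (gF_pos y)]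
      have t1 := abs_add_le (2 * w y - 4 * h) (B * gF y)
      have t2 := abs_sub (2 * w y) (4 * h)
      rw [abs_mul, abs_mul, abs_of_pos (by norm_num : (0:ℝ) < 2),
        abs_of_pos (by norm_num : (0:ℝ) < 4)] at t2
      linarith
    exact abs_nonpos_iff.1 this
  have hdw : DifferentiableWithinAt ℝ w (Ici σ) σ := by
    by_contra hc
    rw [derivWithin_zero_of_not_differentiableWithinAt hc] at h1'
    linarith
  have hcont : Tendsto w (𝓝[>] σ) (𝓝 (w σ)) :=
    hdw.continuousWithinAt.mono_left (nhdsWithin_mono _ Ioi_subset_Ici_self)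
  have hlim : Tendsto w (𝓝[>] σ) (𝓝 (2 * h - B / 2 * gF σ)) := by
    have hc : Tendsto (fun y => 2 * h - B / 2 * gF y) (𝓝[>] σ) (𝓝 (2 * h - B / 2 * gF σ)) :=
      (((gF_deriv σ).continuousAt.tendsto.const_mul _).const_sub _).mono_left nhdsWithin_le_nhds
    refine hc.congr' ?_
    filter_upwards [self_mem_nhdsWithin] with y hy
    rw [hw y hy, hA0]; ring
  have hval := tendsto_nhds_unique hcont hlim
  rw [h0'] at hval
  have hgs := (gF_pos σ).ne'
  have hB2 : B / 2 = 2 * h / gF σ := by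
    rw [eq_div_iff hgs]; linarith
  have hfin : ∀ y, σ ≤ y → w y = wF h σ y := by
    intro y hy
    rcases hy.eq_or_lt with rfl | hy
    · rw [h0', wF_self]
    · rw [hw y hy, hA0]; unfold wF; rw [← hB2]; ring
  refine ⟨?_, hfin⟩
  have e : derivWithin w (Ici σ) σ = derivWithin (wF h σ) (Ici σ) σ :=
    derivWithin_congr (fun y hy => hfin y hy) (hfin σ le_rfl)
  rw [(wF_deriv h σ σ).hasDerivWithinAt.derivWithin (uniqueDiffOn_Ici _ _ self_mem_Ici), h1'] at e
  rw [e]; field_simp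

lemma sigF_anti {α : ℝ} : StrictAntiOn (sigF α) (Ioi 0) := by
  intro a ha b hb hab
  unfold sigF
  apply LIso.symm.strictMono
  have := Real.log_lt_log ha hab
  linarith

lemma sigF_zero {α : ℝ} (hα : 0 < α) : sigF α (α / √Real.pi) = 0 := by
  symm
  have : 0 < √Real.pi := Real.sqrt_pos.2 Real.pi_pos
  rw [sigF_iff hα (by positivity), EF_zero, gF_zero]
  field_simp

/-- **Existence and uniqueness of a self-similar solution** for the source `f = h/√t`,
`h > 0`, with initial domain `D₀ = (0,∞)` and zero initial value: there is a unique
bounded solution of the self-similar form `u(x,t) = √t·w(x/√t)`, `s(t) = σ√t`.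
Moreover `h ↦ σ(h)` is strictly decreasing and smooth on `(0,∞)`, `σ(α/√Real.pi) = 0`, and
`σ(h) < 0 ↔ h > α/√Real.pi`, `σ(h) > 0 ↔ h < α/√Real.pi`. -/
theorem self_similar_solution_exists_unique (α : ℝ) (hα : 0 < α) :
    ∃ sigma : ℝ → ℝ,
      (∀ h : ℝ, 0 < h →
        ∃ w : ℝ → ℝ, IsSelfSimilarSolution α h (sigma h) w ∧
          ∀ (σ' : ℝ) (w' : ℝ → ℝ), IsSelfSimilarSolution α h σ' w' →
            σ' = sigma h ∧ ∀ y : ℝ, sigma h ≤ y → w' y = w y) ∧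
      StrictAntiOn sigma (Ioi 0) ∧
      ContDiffOn ℝ (⊤ : ℕ∞) sigma (Ioi 0) ∧
      sigma (α / Real.sqrt Real.pi) = 0 ∧
      (∀ h : ℝ, 0 < h →
        (sigma h < 0 ↔ α / Real.sqrt Real.pi < h) ∧ (0 < sigma h ↔ h < α / Real.sqrt Real.pi)) := by
  refine ⟨sigF α, ?_, sigF_anti, ?_, sigF_zero hα, ?_⟩
  · intro h hh
    refine ⟨wF h (sigF α h), wF_sol hh ((sigF_iff hα hh).1 rfl), fun σ' w' H => ?_⟩
    obtain ⟨h1, h2⟩ := sol_unique hα H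
    have e := (sigF_iff hα hh).2 h1
    subst e
    exact ⟨rfl, h2⟩
  · unfold sigF
    refine LIso_symm_cd.comp_contDiffOn (contDiffOn_const.sub ?_)
    exact contDiffOn_id.log fun x hx => (mem_Ioi.1 hx).ne'
  · intro h hh
    have hp : α / √Real.pi ∈ Ioi (0:ℝ) := by
      have : 0 < √Real.pi := Real.sqrt_pos.2 Real.pi_pos
      simp only [mem_Ioi]; positivity
    constructor
    · have := (sigF_anti (α := α)).lt_iff_gt (mem_Ioi.2 hh) hp
      rwa [sigF_zero hα] at this
    · have := (sigF_anti (α := α)).lt_iff_gt hp (mem_Ioi.2 hh)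
      rwa [sigF_zero hα] at this
end
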